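/- Let p be an odd prime and r a positive integer. The number of natural numbers u with 0 ≤ u ≤ p^{4r} − 1 such that every digit in the base-p expansion of u is at most (p−1)/2 and p^r + 1 divides u equals ((p²+2p+3)(p+1)/12)^r. -/

import Mathlib

/-!
Write `A` for the set of numbers below `q = b ^ r` with digits in `D`, and cut a number
`u < b ^ (4 * r)` with digits in `D` into its four base-`q` digits `x₁, x₂, y₁, y₂ ∈ A`.
Since `q ≡ -1` modulo `q + 1`, the number `u` is congruent to `(x₁ + y₁) - (x₂ + y₂)`, and both sums
are at most `q` because the elements of `D` are less than `b / 2`. So `q + 1 ∣ u` means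
`x₁ + y₁ = x₂ + y₂`, and the count is the additive energy of `A`. Adding two elements of `A`
involves no carries, so digit expansion is a Freiman isomorphism of `A` with `D ^ r`, whose energy
is the `r`-th power of that of `D`. For `D = {0, …, (p - 1) / 2}`, with `n = (p + 1) / 2` elements,
the energy of `D` is `n * (2 * n ^ 2 + 1) / 3`.
-/

open scoped Combinatorics.Additive Finset

section AdditiveEnergy

variable {α β : Type*}

lemma card_filter_eq_of_bijOn {s : Finset α} {t : Finset β} {f : α → β} {P : α → Prop}
    {Q : β → Prop} [DecidablePred P] [DecidablePred Q] (hf : Set.BijOn f s t)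
    (hPQ : ∀ x ∈ s, P x ↔ Q (f x)) : #{x ∈ s | P x} = #{y ∈ t | Q y} := by
  refine Finset.card_nbij f (fun x hx ↦ ?_) (hf.injOn.mono fun x hx ↦ ?_) fun y hy ↦ ?_
  · rw [Finset.mem_coe, Finset.mem_filter] at hx ⊢
    exact ⟨hf.mapsTo hx.1, (hPQ x hx.1).1 hx.2⟩
  · exact (Finset.mem_filter.1 hx).1
  · obtain ⟨hyt, hQ⟩ := Finset.mem_filter.1 hy
    obtain ⟨x, hx, rfl⟩ := hf.surjOn hyt
    exact ⟨x, Finset.mem_filter.2 ⟨hx, (hPQ x hx).2 hQ⟩, rfl⟩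

variable [DecidableEq α] [DecidableEq β]

lemma addEnergy_eq_of_isAddFreimanIso [AddCommMonoid α] [AddCommMonoid β] {s : Finset α}
    {t : Finset β} {f : α → β} (hf : IsAddFreimanIso 2 (s : Set α) (t : Set β) f) :
    E[s] = E[t] := by
  have hpair := hf.bijOn.prodMap hf.bijOn
  refine card_filter_eq_of_bijOn (f := Prod.map (Prod.map f f) (Prod.map f f))
    (by simp only [Finset.coe_product]; exact hpair.prodMap hpair) ?_
  rintro ⟨⟨a₁, a₂⟩, b₁, b₂⟩ h
  simp only [Finset.mem_product] at h
  exact (hf.add_eq_add h.1.1 h.2.1 h.1.2 h.2.2).symm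

lemma addEnergy_product [Add α] [Add β] (s : Finset α) (t : Finset β) :
    E[s ×ˢ t] = E[s] * E[t] := by
  simp only [Finset.addEnergy, ← Finset.card_product]
  refine Finset.card_nbij'
    (fun x ↦ (((x.1.1.1, x.1.2.1), x.2.1.1, x.2.2.1), (x.1.1.2, x.1.2.2), x.2.1.2, x.2.2.2))
    (fun x ↦ (((x.1.1.1, x.2.1.1), x.1.1.2, x.2.1.2), (x.1.2.1, x.2.2.1), x.1.2.2, x.2.2.2))
    ?_ ?_ (fun _ _ ↦ rfl) (fun _ _ ↦ rfl)
  all_goals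
    intro x
    simp only [Finset.mem_coe, Finset.mem_filter, Finset.mem_product, Prod.ext_iff, Prod.fst_add,
      Prod.snd_add]
    tauto

end AdditiveEnergy

section Range

lemma card_add_eq_add_range_product_range {n a b : ℕ} (ha : a < n) (hb : b < n) :
    (#{z ∈ Finset.range n ×ˢ Finset.range n | a + z.1 = b + z.2} : ℤ) = n - |(a : ℤ) - b| := by
  have hcard : #{z ∈ Finset.range n ×ˢ Finset.range n | a + z.1 = b + z.2} =
      #(Finset.range (n - ((a - b) + (b - a)))) := by
    refine Finset.card_nbij' (fun z ↦ z.1 - (b - a)) (fun k ↦ (k + (b - a), k + (a - b)))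
      ?_ ?_ ?_ ?_ <;> intro z <;>
      simp only [Finset.mem_coe, Finset.mem_filter, Finset.mem_product, Finset.mem_range,
        Prod.ext_iff] <;> omega
  rw [hcard, Finset.card_range]
  rcases le_total a b with h | h
  · rw [abs_of_nonpos (by omega)]; omega
  · rw [abs_of_nonneg (by omega)]; omega

lemma two_mul_sum_range_abs_sub (n : ℕ) :
    2 * ∑ b ∈ Finset.range n, |(n : ℤ) - b| = n * (n + 1) := by
  induction n with
  | zero => simp
  | succ n ih =>
    simp only [Finset.sum_range_succ', Nat.cast_add, Nat.cast_one, add_sub_add_right_eq_sub,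
      mul_add, ih]
    rw [Nat.cast_zero, sub_zero, abs_of_nonneg (by positivity)]
    ring

lemma three_mul_sum_range_sum_range_abs_sub (n : ℕ) :
    3 * ∑ a ∈ Finset.range n, ∑ b ∈ Finset.range n, |(a : ℤ) - b| = n ^ 3 - n := by
  induction n with
  | zero => simp
  | succ n ih =>
    have hsucc : ∑ a ∈ Finset.range (n + 1), ∑ b ∈ Finset.range (n + 1), |(a : ℤ) - b| =
        ∑ a ∈ Finset.range n, ∑ b ∈ Finset.range n, |(a : ℤ) - b| +
          2 * ∑ b ∈ Finset.range n, |(n : ℤ) - b| := by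
      simp only [Finset.sum_range_succ, Finset.sum_add_distrib, abs_sub_comm _ (n : ℤ), sub_self,
        abs_zero]
      ring
    rw [hsucc, two_mul_sum_range_abs_sub, mul_add, ih]
    push_cast
    ring

lemma three_mul_addEnergy_range (n : ℕ) : 3 * E[Finset.range n] = n * (2 * n ^ 2 + 1) := by
  have hsum : (E[Finset.range n] : ℤ) =
      ∑ a ∈ Finset.range n, ∑ b ∈ Finset.range n, ((n : ℤ) - |(a : ℤ) - b|) := by
    rw [Finset.addEnergy, Finset.card_filter, Finset.sum_product, Finset.sum_product]
    simp only [← Finset.card_filter, Nat.cast_sum]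
    exact Finset.sum_congr rfl fun a ha ↦ Finset.sum_congr rfl fun b hb ↦
      card_add_eq_add_range_product_range (Finset.mem_range.1 ha) (Finset.mem_range.1 hb)
  simp only [Finset.sum_sub_distrib, Finset.sum_const, Finset.card_range, nsmul_eq_mul] at hsum
  zify
  linear_combination 3 * hsum - three_mul_sum_range_sum_range_abs_sub n

lemma addEnergy_range_of_odd {p : ℕ} (hp : Odd p) :
    E[Finset.range ((p - 1) / 2 + 1)] = (p ^ 2 + 2 * p + 3) * (p + 1) / 12 := by
  obtain ⟨m, rfl⟩ := hp
  rw [show (2 * m + 1 - 1) / 2 + 1 = m + 1 by omega]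
  refine (Nat.div_eq_of_eq_mul_right (by norm_num) ?_).symm
  linear_combination 4 * (three_mul_addEnergy_range (m + 1)).symm

end Range

section Digits

/-- The set of natural numbers below `b ^ n` all of whose base-`b` digits lie in `D`. As
`Nat.digits` omits leading zeros, these are the values of the `n`-digit strings over `D` only if
`0 ∈ D`. -/
def natsWithDigitsIn (b : ℕ) (D : Finset ℕ) (n : ℕ) : Finset ℕ :=
  {u ∈ Finset.range (b ^ n) | ∀ c ∈ b.digits u, c ∈ D}

variable {b m n q : ℕ} {D : Finset ℕ}

lemma mem_natsWithDigitsIn {u : ℕ} :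
    u ∈ natsWithDigitsIn b D n ↔ u < b ^ n ∧ ∀ c ∈ b.digits u, c ∈ D := by
  simp only [natsWithDigitsIn, Finset.mem_filter, Finset.mem_range]

lemma forall_mem_digits_add_pow_mul (hb : 1 < b) (h0 : 0 ∈ D) {x : ℕ} (hx : x < b ^ m) (y : ℕ) :
    (∀ c ∈ b.digits (x + b ^ m * y), c ∈ D) ↔
      (∀ c ∈ b.digits x, c ∈ D) ∧ ∀ c ∈ b.digits y, c ∈ D := by
  rcases y.eq_zero_or_pos with rfl | hy
  · simp
  have hlen : (b.digits x).length + (m - (b.digits x).length) = m :=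
    Nat.add_sub_cancel' ((Nat.digits_length_le_iff hb x).2 hx)
  have hdigits := Nat.digits_append_zeroes_append_digits (k := m - (b.digits x).length) (n := x)
    hb hy
  rw [hlen] at hdigits
  simp only [← hdigits, List.mem_append, List.mem_replicate]
  grind

lemma add_mul_lt_mul_iff {x y k : ℕ} (hx : x < q) : x + q * y < q * k ↔ y < k := by
  rw [mul_comm q k, ← Nat.div_lt_iff_lt_mul (by omega), Nat.add_mul_div_left _ _ (by omega),
    Nat.div_eq_of_lt hx, zero_add]

lemma add_pow_mul_mem_natsWithDigitsIn (hb : 1 < b) (h0 : 0 ∈ D) {x : ℕ} (hx : x < b ^ m) (y : ℕ) :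
    x + b ^ m * y ∈ natsWithDigitsIn b D (m + n) ↔
      x ∈ natsWithDigitsIn b D m ∧ y ∈ natsWithDigitsIn b D n := by
  simp only [mem_natsWithDigitsIn, forall_mem_digits_add_pow_mul hb h0 hx, pow_add,
    add_mul_lt_mul_iff hx]
  tauto

lemma injOn_add_mul {s t : Set ℕ} (hs : ∀ x ∈ s, x < q) :
    Set.InjOn (fun z : ℕ × ℕ ↦ z.1 + q * z.2) (s ×ˢ t) := by
  rintro ⟨x, y⟩ ⟨hx, -⟩ ⟨x', y'⟩ ⟨hx', -⟩ h
  have hmod := congrArg (· % q) h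
  have hdiv := congrArg (· / q) h
  have hq : 0 < q := (Nat.zero_le x).trans_lt (hs x hx)
  simp only [Nat.add_mul_mod_self_left, Nat.mod_eq_of_lt (hs _ hx), Nat.mod_eq_of_lt (hs _ hx'),
    Nat.add_mul_div_left _ _ hq, Nat.div_eq_of_lt (hs _ hx), Nat.div_eq_of_lt (hs _ hx'),
    zero_add] at hmod hdiv
  exact Prod.ext hmod hdiv

lemma bijOn_add_pow_mul (hb : 1 < b) (h0 : 0 ∈ D) (m n : ℕ) :
    Set.BijOn (fun z : ℕ × ℕ ↦ z.1 + b ^ m * z.2)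
      (natsWithDigitsIn b D m ×ˢ natsWithDigitsIn b D n : Finset (ℕ × ℕ))
      (natsWithDigitsIn b D (m + n)) := by
  have hlt : ∀ x ∈ natsWithDigitsIn b D m, x < b ^ m := fun x hx ↦ (mem_natsWithDigitsIn.1 hx).1
  refine ⟨fun z hz ↦ ?_, ?_, fun u hu ↦ ⟨(u % b ^ m, u / b ^ m), ?_, Nat.mod_add_div u _⟩⟩
  · obtain ⟨hx, hy⟩ := Finset.mem_product.1 hz
    exact (add_pow_mul_mem_natsWithDigitsIn hb h0 (hlt _ hx) _).2 ⟨hx, hy⟩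
  · rw [Finset.coe_product]
    exact injOn_add_mul hlt
  · rw [Finset.mem_coe, ← Nat.mod_add_div u (b ^ m), add_pow_mul_mem_natsWithDigitsIn hb h0
      (Nat.mod_lt _ (by positivity))] at hu
    exact Finset.mem_product.2 hu

-- Doubling every digit produces no carry.
lemma two_mul_lt_of_mem_natsWithDigitsIn (hb : 1 < b) (hD : ∀ d ∈ D, 2 * d < b) {x : ℕ}
    (hx : x ∈ natsWithDigitsIn b D n) : 2 * x < b ^ n := by
  obtain ⟨hlt, hdigits⟩ := mem_natsWithDigitsIn.1 hx
  have hdouble : ∀ c ∈ (b.digits x).map (2 * ·), c < b := by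
    simpa only [List.forall_mem_map] using fun d hd ↦ hD d (hdigits d hd)
  calc 2 * x = Nat.ofDigits b ((b.digits x).map (2 * ·)) := by
        rw [← Nat.mul_ofDigits, Nat.ofDigits_digits]
    _ < b ^ ((b.digits x).map (2 * ·)).length := Nat.ofDigits_lt_base_pow_length hb hdouble
    _ ≤ b ^ n := by
        rw [List.length_map]
        exact Nat.pow_le_pow_right (by omega) ((Nat.digits_length_le_iff hb x).2 hlt)

lemma isAddFreimanIso_add_mul {s t u : Set ℕ} (hs : ∀ x ∈ s, 2 * x < q)
    (hf : Set.BijOn (fun z : ℕ × ℕ ↦ z.1 + q * z.2) (s ×ˢ t) u) :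
    IsAddFreimanIso 2 (s ×ˢ t) u (fun z : ℕ × ℕ ↦ z.1 + q * z.2) := by
  refine isAddFreimanIso_two.2 ⟨hf, ?_⟩
  have hadd : ∀ z ∈ s ×ˢ t, ∀ w ∈ s ×ˢ t, z + w ∈ Set.Iio q ×ˢ (Set.univ : Set ℕ) :=
    fun z hz w hw ↦ by
      have := hs z.1 hz.1
      have := hs w.1 hw.1
      exact ⟨show z.1 + w.1 < q by omega, trivial⟩
  have hmap : ∀ z w : ℕ × ℕ, z.1 + q * z.2 + (w.1 + q * w.2) = (z + w).1 + q * (z + w).2 :=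
    fun z w ↦ by simp only [Prod.fst_add, Prod.snd_add]; ring
  intro z₁ hz₁ z₂ hz₂ z₃ hz₃ z₄ hz₄
  rw [hmap, hmap]
  exact (injOn_add_mul fun _ h ↦ h).eq_iff (hadd _ hz₁ _ hz₂) (hadd _ hz₃ _ hz₄)

lemma addEnergy_natsWithDigitsIn_add (hb : 1 < b) (h0 : 0 ∈ D) (hD : ∀ d ∈ D, 2 * d < b)
    (m n : ℕ) : E[natsWithDigitsIn b D (m + n)] =
      E[natsWithDigitsIn b D m] * E[natsWithDigitsIn b D n] := by
  rw [← addEnergy_product]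
  refine (addEnergy_eq_of_isAddFreimanIso (f := fun z ↦ z.1 + b ^ m * z.2) ?_).symm
  have hbij := bijOn_add_pow_mul hb h0 m n
  rw [Finset.coe_product] at hbij ⊢
  exact isAddFreimanIso_add_mul (fun x ↦ two_mul_lt_of_mem_natsWithDigitsIn hb hD) hbij

lemma natsWithDigitsIn_zero : natsWithDigitsIn b D 0 = {0} := by
  ext u
  simp +contextual [mem_natsWithDigitsIn]

lemma natsWithDigitsIn_one (h0 : 0 ∈ D) (hD : ∀ d ∈ D, d < b) : natsWithDigitsIn b D 1 = D := by
  ext u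
  rw [mem_natsWithDigitsIn, pow_one]
  rcases eq_or_ne u 0 with rfl | hu
  · simpa [h0] using hD 0 h0
  · exact ⟨fun ⟨hlt, h⟩ ↦ h u (by simp [Nat.digits_of_lt b u hu hlt]),
      fun h ↦ ⟨hD u h, by simpa [Nat.digits_of_lt b u hu (hD u h)] using h⟩⟩

lemma addEnergy_natsWithDigitsIn (hb : 1 < b) (h0 : 0 ∈ D) (hD : ∀ d ∈ D, 2 * d < b) (n : ℕ) :
    E[natsWithDigitsIn b D n] = E[D] ^ n := by
  induction n with
  | zero => rw [natsWithDigitsIn_zero]; rfl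
  | succ n ih =>
    rw [addEnergy_natsWithDigitsIn_add hb h0 hD, ih, pow_succ,
      natsWithDigitsIn_one h0 fun d hd ↦ by have := hD d hd; omega]

end Digits

section Divisibility

lemma succ_dvd_add_mul_iff {q x y : ℕ} (hx : x ≤ q) (hy : y ≤ q) : q + 1 ∣ x + q * y ↔ x = y := by
  have hsub : ((x + q * y : ℕ) : ℤ) = (x - y) + (q + 1 : ℕ) * y := by push_cast; ring
  rw [← Int.natCast_dvd_natCast, hsub, dvd_add_left (dvd_mul_right _ _)]
  refine ⟨fun h ↦ ?_, fun h ↦ by simp [h]⟩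
  have := Int.eq_zero_of_abs_lt_dvd h (by rw [abs_lt]; omega)
  omega

lemma succ_dvd_four_digits_iff {q x₁ x₂ y₁ y₂ : ℕ} (h₁ : x₁ + y₁ ≤ q) (h₂ : x₂ + y₂ ≤ q) :
    q + 1 ∣ x₁ + q * x₂ + q ^ 2 * (y₁ + q * y₂) ↔ x₁ + y₁ = x₂ + y₂ := by
  have hsq : q ^ 2 ≡ 1 [MOD q + 1] :=
    ((Nat.modEq_iff_dvd).2 ⟨(q : ℤ) - 1, by push_cast; ring⟩).symm
  have hmod : x₁ + q * x₂ + q ^ 2 * (y₁ + q * y₂) ≡ x₁ + y₁ + q * (x₂ + y₂) [MOD q + 1] := by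
    convert (hsq.mul_right (y₁ + q * y₂)).add_left (x₁ + q * x₂) using 1
    ring
  rw [hmod.dvd_iff dvd_rfl, succ_dvd_add_mul_iff h₁ h₂]

end Divisibility

lemma card_natsWithDigitsIn_filter_dvd {b : ℕ} {D : Finset ℕ} (hb : 1 < b) (h0 : 0 ∈ D)
    (hD : ∀ d ∈ D, 2 * d < b) (r : ℕ) :
    #{u ∈ natsWithDigitsIn b D (4 * r) | b ^ r + 1 ∣ u} = E[natsWithDigitsIn b D r] := by
  have hhalf : ∀ x ∈ natsWithDigitsIn b D r, ∀ y ∈ natsWithDigitsIn b D r, x + y ≤ b ^ r :=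
    fun x hx y hy ↦ by
      have := two_mul_lt_of_mem_natsWithDigitsIn hb hD hx
      have := two_mul_lt_of_mem_natsWithDigitsIn hb hD hy
      omega
  have hpair := bijOn_add_pow_mul hb h0 r r
  have hfour := bijOn_add_pow_mul hb h0 (r + r) (r + r)
  rw [Finset.coe_product] at hfour
  rw [show 4 * r = r + r + (r + r) by ring]
  refine (card_filter_eq_of_bijOn (f := fun z : (ℕ × ℕ) × ℕ × ℕ ↦
    z.1.1 + b ^ r * z.1.2 + b ^ (r + r) * (z.2.1 + b ^ r * z.2.2)) ?_ ?_).symm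
  · rw [Finset.coe_product]
    exact hfour.comp (hpair.prodMap hpair)
  · rintro ⟨⟨x₁, x₂⟩, y₁, y₂⟩ h
    simp only [Finset.mem_product] at h
    rw [← two_mul, mul_comm 2, pow_mul, succ_dvd_four_digits_iff (hhalf _ h.1.1 _ h.2.1)
      (hhalf _ h.1.2 _ h.2.2)]

theorem stmt_19_general {b : ℕ} {D : Finset ℕ} (hb : 1 < b) (h0 : 0 ∈ D)
    (hD : ∀ d ∈ D, 2 * d < b) (r : ℕ) :
    #{u ∈ Finset.range (b ^ (4 * r)) | (∀ c ∈ b.digits u, c ∈ D) ∧ b ^ r + 1 ∣ u} = E[D] ^ r := by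
  rw [← addEnergy_natsWithDigitsIn hb h0 hD, ← card_natsWithDigitsIn_filter_dvd hb h0 hD,
    natsWithDigitsIn, Finset.filter_filter]

/-- For `p` an odd prime and `r ≥ 1`, the number of `u ∈ {0, …, p^(4r)−1}` all of whose
base-`p` digits are at most `(p−1)/2` and which are divisible by `p^r + 1` equals
`((p²+2p+3)(p+1)/12)^r`. -/
theorem stmt_19 (p r : ℕ) (hp : p.Prime) (hodd : Odd p) (hr : 0 < r) :
    ((Finset.range (p ^ (4 * r))).filter
      (fun u => (∀ c ∈ Nat.digits p u, c ≤ (p - 1) / 2) ∧ (p ^ r + 1) ∣ u)).card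
    = ((p ^ 2 + 2 * p + 3) * (p + 1) / 12) ^ r := by
  have hD : ∀ d ∈ Finset.range ((p - 1) / 2 + 1), 2 * d < p := fun d hd ↦ by
    have := Finset.mem_range.1 hd; have := hp.pos; omega
  simpa only [Finset.mem_range, Nat.lt_succ_iff, addEnergy_range_of_odd hodd] using
    stmt_19_general hp.one_lt (Finset.mem_range.2 (Nat.succ_pos _)) hD r
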